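/- Let α be a badly approximable irrational real number, λ = exp(2πiα), and let m₁(x) = Σ_{k≥0} x^k/(D(1)···D(k)) be the linear solution (radius of convergence 1). Define the matrix A(x) = [[2 − x, −1], [1, 0]] and the vector V(x) = (m₁(x), m₁(x/λ)) for |x| < 1. Then V satisfies the cocycle relation V(λx) = A(x)·V(x), hence for every n ≥ 1, V(λⁿx) = A(λ^{n−1}x)···A(λx)·A(x)·V(x); moreover for each fixed x with |x| < 1 the vector V(x) is nonzero and the sequence of matrix products applied to V(x) remains bounded: sup_{n} ‖A(λ^{n−1}x)···A(x)·V(x)‖ < ∞. -/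

import Mathlib

open Filter Matrix

/-- `D α k = 2(1 - cos(2πkα))`, the small denominator of the Master recursion. -/
noncomputable def D (α : ℝ) (k : ℕ) : ℝ := 2 * (1 - Real.cos (2 * Real.pi * k * α))

/-- The ordered product `A (n-1) * ⋯ * A 1 * A 0` of a sequence of `2×2` complex
matrices (empty product is the identity). -/
noncomputable def matProd (A : ℕ → Matrix (Fin 2) (Fin 2) ℂ) : ℕ → Matrix (Fin 2) (Fin 2) ℂ
  | 0 => 1
  | (n + 1) => A n * matProd A n

open scoped Real Topology

/-!
Comparing coefficients of `x ^ k` gives `m₁(λx) + m₁(x/λ) - 2 m₁(x) = -x m₁(x)`, because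
`λ ^ k + λ ^ (-k) - 2 = -D(k)`; this is the first row of `V(λx) = A(x) V(x)`. On the circle of
radius `|x|` the series is dominated by its absolute values at `x`, so `V` is bounded along the
orbit. If `V(x)` vanished, so would `m₁` at every `λⁿx`, whereas the averages of `m₁` along the
orbit tend to the constant term `m₁(0) = 1`.

Bad approximability enters only through the convergence of the series in the unit disk. Since
`D(j) = |1 - λ ^ j| ^ 2`, one has to bound `∑_{j ≤ k} log |1 - λ ^ j|` from below by `-O(1) - εk`.
Replacing `λ ^ j` by `r λ ^ j` with `r = 1 - σ ^ 2` makes the sum `O(1)`, by expanding the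
logarithm, and costs at most `2σ |1 - λ ^ j| ^ (-1/2)` in each term. The points `λ ^ j` with `j ≤ k`
are separated by a multiple of `1 / k`, so the inverse square roots sum to `O(k)`, and `σ` is small.
-/

lemma sum_Icc_inv_sqrt_le (n : ℕ) : ∑ t ∈ Finset.Icc 1 n, (√(t : ℝ))⁻¹ ≤ 2 * √(n : ℝ) := by
  induction n with
  | zero => simp
  | succ n ih =>
    have hpos : 0 < √((n + 1 : ℕ) : ℝ) := Real.sqrt_pos.mpr (by positivity)
    have hstep : (√((n + 1 : ℕ) : ℝ))⁻¹ ≤ 2 * √((n + 1 : ℕ) : ℝ) - 2 * √(n : ℝ) := by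
      rw [inv_le_iff_one_le_mul₀ hpos]
      have hsq := Real.sq_sqrt (show (0 : ℝ) ≤ ((n + 1 : ℕ) : ℝ) by positivity)
      have hsq' := Real.sq_sqrt (show (0 : ℝ) ≤ (n : ℝ) by positivity)
      push_cast at hsq hsq' ⊢
      nlinarith [sq_nonneg (√((n : ℝ) + 1) - √(n : ℝ))]
    rw [Finset.sum_Icc_succ_top (by omega)]
    linarith

section Separated

variable {ι : Type*} {s : Finset ι} {f : ι → ℝ} {δ M : ℝ}

lemma injOn_floor_div_of_separated (hδ : 0 < δ) (hf : ∀ i ∈ s, 0 ≤ f i)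
    (hsep : (s : Set ι).Pairwise fun i j => δ ≤ |f i - f j|) :
    Set.InjOn (fun i => ⌊f i / δ⌋₊) s := by
  intro i hi j hj hij
  by_contra hne
  have hint : ⌊f i / δ⌋ = ⌊f j / δ⌋ := by
    rw [← Int.natCast_floor_eq_floor (div_nonneg (hf i hi) hδ.le),
      ← Int.natCast_floor_eq_floor (div_nonneg (hf j hj) hδ.le)]
    exact congrArg _ hij
  have hlt := Int.abs_sub_lt_one_of_floor_eq_floor hint
  rw [← sub_div, abs_div, abs_of_pos hδ, div_lt_one hδ] at hlt
  exact (hsep hi hj hne).not_gt hlt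

-- `δ`-separated points lie in distinct cells `[nδ, (n + 1)δ)`, so their inverse square roots sum
-- to at most the sum of `(nδ) ^ (-1/2)` over the cells that `[δ, M]` meets.
lemma sum_inv_sqrt_le_of_separated_of_pos (hδ : 0 < δ) (hM : 0 ≤ M)
    (hlow : ∀ i ∈ s, δ ≤ f i) (hup : ∀ i ∈ s, f i ≤ M)
    (hsep : (s : Set ι).Pairwise fun i j => δ ≤ |f i - f j|) :
    ∑ i ∈ s, (√(f i))⁻¹ ≤ 2 * √M / δ := by
  set t : ι → ℕ := fun i => ⌊f i / δ⌋₊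
  have hf : ∀ i ∈ s, 0 ≤ f i := fun i hi => hδ.le.trans (hlow i hi)
  have ht_pos : ∀ i ∈ s, 1 ≤ t i := fun i hi =>
    (Nat.one_le_floor_iff _).mpr ((one_le_div hδ).mpr (hlow i hi))
  have ht_mem : s.image t ⊆ Finset.Icc 1 ⌊M / δ⌋₊ := by
    intro n hn
    obtain ⟨i, hi, rfl⟩ := Finset.mem_image.mp hn
    exact Finset.mem_Icc.mpr ⟨ht_pos i hi, Nat.floor_le_floor (by gcongr; exact hup i hi)⟩
  have hterm : ∀ i ∈ s, (√(f i))⁻¹ ≤ (√δ)⁻¹ * (√(t i : ℝ))⁻¹ := by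
    intro i hi
    have hle : δ * t i ≤ f i := by
      rw [← le_div_iff₀' hδ]
      exact Nat.floor_le (div_nonneg (hf i hi) hδ.le)
    have ht0 : (0 : ℝ) < t i := by exact_mod_cast ht_pos i hi
    rw [← mul_inv, ← Real.sqrt_mul hδ.le]
    gcongr
  calc ∑ i ∈ s, (√(f i))⁻¹
      ≤ ∑ i ∈ s, (√δ)⁻¹ * (√(t i : ℝ))⁻¹ := Finset.sum_le_sum hterm
    _ = (√δ)⁻¹ * ∑ n ∈ s.image t, (√(n : ℝ))⁻¹ := by
        rw [Finset.sum_image (injOn_floor_div_of_separated hδ hf hsep), Finset.mul_sum]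
    _ ≤ (√δ)⁻¹ * ∑ n ∈ Finset.Icc 1 ⌊M / δ⌋₊, (√(n : ℝ))⁻¹ := by gcongr
    _ ≤ (√δ)⁻¹ * (2 * √(M / δ)) := by
        gcongr
        refine (sum_Icc_inv_sqrt_le _).trans ?_
        gcongr
        exact Nat.floor_le (by positivity)
    _ = 2 * √M / δ := by
        rw [Real.sqrt_div hM]
        field_simp
        rw [Real.sq_sqrt hδ.le, mul_comm]

lemma sum_inv_sqrt_abs_le_of_separated (hδ : 0 < δ) (hM : 0 ≤ M)
    (hlow : ∀ i ∈ s, δ ≤ |f i|) (hup : ∀ i ∈ s, |f i| ≤ M)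
    (hsep : (s : Set ι).Pairwise fun i j => δ ≤ |f i - f j|) :
    ∑ i ∈ s, (√|f i|)⁻¹ ≤ 4 * √M / δ := by
  have hnonneg : ∑ i ∈ s with 0 ≤ f i, (√|f i|)⁻¹ ≤ 2 * √M / δ := by
    refine sum_inv_sqrt_le_of_separated_of_pos hδ hM
      (fun i hi => hlow i (Finset.mem_of_mem_filter i hi))
      (fun i hi => hup i (Finset.mem_of_mem_filter i hi)) fun i hi j hj hij => ?_
    obtain ⟨his, hi0⟩ := Finset.mem_filter.mp hi
    obtain ⟨hjs, hj0⟩ := Finset.mem_filter.mp hj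
    simpa only [abs_of_nonneg hi0, abs_of_nonneg hj0] using hsep his hjs hij
  have hneg : ∑ i ∈ s with ¬0 ≤ f i, (√|f i|)⁻¹ ≤ 2 * √M / δ := by
    refine sum_inv_sqrt_le_of_separated_of_pos hδ hM
      (fun i hi => hlow i (Finset.mem_of_mem_filter i hi))
      (fun i hi => hup i (Finset.mem_of_mem_filter i hi)) fun i hi j hj hij => ?_
    obtain ⟨his, hi0⟩ := Finset.mem_filter.mp hi
    obtain ⟨hjs, hj0⟩ := Finset.mem_filter.mp hj
    rw [abs_of_neg (not_le.mp hi0), abs_of_neg (not_le.mp hj0), neg_sub_neg, abs_sub_comm]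
    exact hsep his hjs hij
  rw [← Finset.sum_filter_add_sum_filter_not s fun i => 0 ≤ f i]
  calc _ ≤ 2 * √M / δ + 2 * √M / δ := add_le_add hnonneg hneg
    _ = 4 * √M / δ := by ring

end Separated

lemma norm_geom_sum_le {𝕜 : Type*} [NormedDivisionRing 𝕜] {w : 𝕜} (hw : ‖w‖ ≤ 1) (hw1 : w ≠ 1)
    (n : ℕ) : ‖∑ i ∈ Finset.range n, w ^ i‖ ≤ 2 / ‖1 - w‖ := by
  rw [le_div_iff₀ (norm_sub_pos_iff.mpr hw1.symm), ← norm_mul, geom_sum_mul_neg]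
  calc ‖1 - w ^ n‖ ≤ ‖(1 : 𝕜)‖ + ‖w ^ n‖ := norm_sub_le _ _
    _ ≤ 1 + 1 := by
        rw [norm_one, norm_pow]
        gcongr
        exact pow_le_one₀ (norm_nonneg w) hw
    _ = 2 := one_add_one_eq_two

lemma norm_sub_le_abs_arg_sub {z w : ℂ} (hz : ‖z‖ = 1) (hw : ‖w‖ = 1) :
    ‖z - w‖ ≤ |z.arg - w.arg| := by
  have hz' : Complex.exp (z.arg * Complex.I) = z := by
    simpa [hz] using Complex.norm_mul_exp_arg_mul_I z
  have hw' : Complex.exp (w.arg * Complex.I) = w := by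
    simpa [hw] using Complex.norm_mul_exp_arg_mul_I w
  have hfactor : z - w = w * (Complex.exp (Complex.I * (z.arg - w.arg : ℝ)) - 1) := by
    nth_rw 1 [← hz']
    nth_rw 1 [← hw']
    nth_rw 2 [← hw']
    rw [mul_sub_one, ← Complex.exp_add]
    push_cast
    ring_nf
  rw [hfactor, norm_mul, hw, one_mul]
  exact Real.norm_exp_I_mul_ofReal_sub_one_le

lemma abs_arg_le_pi_mul_norm_one_sub {z : ℂ} (hz : ‖z‖ = 1) :
    |z.arg| ≤ π * ‖1 - z‖ := by
  have hz0 : z ≠ 0 := norm_ne_zero_iff.mp (hz ▸ one_ne_zero)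
  rw [← Complex.angle_one_left hz0]
  refine (Complex.angle_le_mul_norm_sub norm_one hz).trans ?_
  gcongr
  exact half_le_self Real.pi_pos.le

lemma neg_sum_log_norm_one_sub_le {ι : Type*} {s : Finset ι} {z : ι → ℂ} {g : ℕ → ℝ} {G : ℝ}
    (hz : ∀ i ∈ s, ‖z i‖ < 1) (hg : HasSum g G) (hzg : ∀ n : ℕ, ‖∑ i ∈ s, z i ^ n / n‖ ≤ g n) :
    -∑ i ∈ s, Real.log ‖1 - z i‖ ≤ G := by
  have hsum : HasSum (fun n : ℕ => ∑ i ∈ s, z i ^ n / n) (∑ i ∈ s, -Complex.log (1 - z i)) :=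
    hasSum_sum fun i hi => Complex.hasSum_taylorSeries_neg_log (hz i hi)
  calc -∑ i ∈ s, Real.log ‖1 - z i‖ = (∑ i ∈ s, -Complex.log (1 - z i)).re := by
        simp only [Complex.re_sum, Complex.neg_re, Complex.log_re, Finset.sum_neg_distrib]
    _ ≤ ‖∑ i ∈ s, -Complex.log (1 - z i)‖ := Complex.re_le_norm _
    _ ≤ G := by
        rw [← hsum.tsum_eq]
        exact tsum_of_norm_bounded hg hzg

lemma log_one_add_sq_le {v : ℝ} (hv : 0 ≤ v) : Real.log (1 + v ^ 2) ≤ 2 * v := by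
  calc Real.log (1 + v ^ 2) ≤ Real.log ((1 + v) ^ 2) :=
        Real.log_le_log (by positivity) (by nlinarith)
    _ = 2 * Real.log (1 + v) := by rw [Real.log_pow, Nat.cast_ofNat]
    _ ≤ 2 * v := by linarith [Real.log_le_sub_one_of_pos (show 0 < 1 + v by linarith)]

lemma log_norm_one_sub_mul_le {z : ℂ} (hz : ‖z‖ ≤ 1) (hz1 : z ≠ 1) {σ : ℝ} (hσ0 : 0 < σ)
    (hσ1 : σ ≤ 1) :
    Real.log ‖1 - (1 - σ ^ 2 : ℝ) * z‖ ≤ Real.log ‖1 - z‖ + 2 * σ * (√‖1 - z‖)⁻¹ := by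
  set u := ‖1 - z‖
  have hu : 0 < u := norm_sub_pos_iff.mpr hz1.symm
  have hlt : ‖((1 - σ ^ 2 : ℝ) : ℂ) * z‖ < 1 := by
    rw [norm_mul, Complex.norm_real, Real.norm_of_nonneg (by nlinarith)]
    nlinarith [mul_nonneg (sq_nonneg σ) (norm_nonneg z), pow_pos hσ0 2,
      mul_le_mul_of_nonneg_left hz (sub_nonneg.mpr (pow_le_one₀ hσ0.le hσ1 : σ ^ 2 ≤ 1))]
  have hpos : 0 < ‖1 - (1 - σ ^ 2 : ℝ) * z‖ := by
    refine norm_sub_pos_iff.mpr fun h => hlt.ne ?_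
    rw [← h, norm_one]
  have hle : ‖1 - (1 - σ ^ 2 : ℝ) * z‖ ≤ u * (1 + (σ / √u) ^ 2) :=
    calc ‖1 - (1 - σ ^ 2 : ℝ) * z‖ = ‖(1 - z) + (σ ^ 2 : ℝ) * z‖ := by
          push_cast
          ring_nf
      _ ≤ u + ‖((σ ^ 2 : ℝ) : ℂ) * z‖ := norm_add_le _ _
      _ ≤ u + σ ^ 2 := by
          rw [norm_mul, Complex.norm_real, Real.norm_of_nonneg (sq_nonneg σ)]
          gcongr
          exact mul_le_of_le_one_right (sq_nonneg σ) hz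
      _ = u * (1 + (σ / √u) ^ 2) := by
          rw [div_pow, Real.sq_sqrt hu.le]
          field_simp
  calc Real.log ‖1 - (1 - σ ^ 2 : ℝ) * z‖ ≤ Real.log (u * (1 + (σ / √u) ^ 2)) :=
        Real.log_le_log hpos hle
    _ = Real.log u + Real.log (1 + (σ / √u) ^ 2) := Real.log_mul hu.ne' (by positivity)
    _ ≤ Real.log u + 2 * (σ / √u) := by
        gcongr
        exact log_one_add_sq_le (by positivity)
    _ = Real.log u + 2 * σ * (√u)⁻¹ := by ring

/-- The multiplicative form of bad approximability: `l` lies on the unit circle and its small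
divisors satisfy `‖1 - l ^ n‖ ≥ c / n`. For `l = exp (2πiα)` this holds for some `c > 0` when `α` is
badly approximable; working with `l` keeps the estimates free of integer parts. -/
structure IsBadlyApproximableMultiplier (c : ℝ) (l : ℂ) : Prop where
  pos : 0 < c
  norm_eq_one : ‖l‖ = 1
  div_le_norm_one_sub_pow : ∀ n : ℕ, 0 < n → c / n ≤ ‖1 - l ^ n‖

namespace IsBadlyApproximableMultiplier

variable {c : ℝ} {l : ℂ}

lemma norm_pow_eq_one (h : IsBadlyApproximableMultiplier c l) (n : ℕ) : ‖l ^ n‖ = 1 := by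
  rw [norm_pow, h.norm_eq_one, one_pow]

lemma norm_one_sub_pow_pos (h : IsBadlyApproximableMultiplier c l) {n : ℕ} (hn : 0 < n) :
    0 < ‖1 - l ^ n‖ :=
  (div_pos h.pos (Nat.cast_pos.mpr hn)).trans_le (h.div_le_norm_one_sub_pow n hn)

lemma pow_ne_one (h : IsBadlyApproximableMultiplier c l) {n : ℕ} (hn : 0 < n) : l ^ n ≠ 1 :=
  (norm_sub_pos_iff.mp (h.norm_one_sub_pow_pos hn)).symm

lemma div_le_abs_arg_pow (h : IsBadlyApproximableMultiplier c l) {n : ℕ} (hn : 0 < n) :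
    c / n ≤ |(l ^ n).arg| := by
  refine (h.div_le_norm_one_sub_pow n hn).trans ?_
  simpa using norm_sub_le_abs_arg_sub norm_one (h.norm_pow_eq_one n)

lemma div_le_abs_arg_pow_sub (h : IsBadlyApproximableMultiplier c l) {i j : ℕ} (hij : i < j) :
    c / (j - i : ℕ) ≤ |(l ^ i).arg - (l ^ j).arg| :=
  calc c / (j - i : ℕ) ≤ ‖1 - l ^ (j - i)‖ := h.div_le_norm_one_sub_pow _ (Nat.sub_pos_of_lt hij)
    _ = ‖l ^ i - l ^ j‖ := by
        rw [← Nat.add_sub_of_le hij.le, pow_add, ← mul_one_sub, norm_mul, h.norm_pow_eq_one,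
          one_mul, Nat.add_sub_cancel_left]
    _ ≤ _ := norm_sub_le_abs_arg_sub (h.norm_pow_eq_one i) (h.norm_pow_eq_one j)

lemma pairwise_div_le_abs_arg_pow_sub (h : IsBadlyApproximableMultiplier c l) (k : ℕ) :
    (Finset.Icc 1 k : Set ℕ).Pairwise fun i j => c / k ≤ |(l ^ i).arg - (l ^ j).arg| := by
  have hlt : ∀ i j : ℕ, i < j → j ≤ k → c / k ≤ |(l ^ i).arg - (l ^ j).arg| := fun i j hij hjk => by
    refine le_trans ?_ (h.div_le_abs_arg_pow_sub hij)
    have hpos : (0 : ℝ) < (j - i : ℕ) := Nat.cast_pos.mpr (Nat.sub_pos_of_lt hij)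
    have hle : j - i ≤ k := (Nat.sub_le j i).trans hjk
    have := h.pos
    gcongr
  intro i hi j hj hij
  rcases hij.lt_or_gt with hij | hij
  · exact hlt i j hij (Finset.mem_Icc.mp hj).2
  · rw [abs_sub_comm]
    exact hlt j i hij (Finset.mem_Icc.mp hi).2

lemma sum_inv_sqrt_norm_one_sub_pow_le (h : IsBadlyApproximableMultiplier c l) (k : ℕ) :
    ∑ j ∈ Finset.Icc 1 k, (√‖1 - l ^ j‖)⁻¹ ≤ 4 * π / c * k := by
  have hc := h.pos
  rcases k.eq_zero_or_pos with rfl | hk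
  · simp
  have hlow : ∀ j ∈ Finset.Icc 1 k, c / k ≤ |(l ^ j).arg| := fun j hj => by
    obtain ⟨hj1, hjk⟩ := Finset.mem_Icc.mp hj
    refine le_trans ?_ (h.div_le_abs_arg_pow hj1)
    have hj0 : (0 : ℝ) < j := Nat.cast_pos.mpr hj1
    gcongr
  have hterm : ∀ j ∈ Finset.Icc 1 k,
      (√‖1 - l ^ j‖)⁻¹ ≤ √π * (√|(l ^ j).arg|)⁻¹ := fun j hj => by
    have harg : 0 < |(l ^ j).arg| := (by positivity : 0 < c / k).trans_le (hlow j hj)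
    have hchord : 0 < ‖1 - l ^ j‖ := h.norm_one_sub_pow_pos (Finset.mem_Icc.mp hj).1
    rw [← div_eq_mul_inv, inv_le_comm₀ (by positivity) (by positivity), inv_div,
      div_le_iff₀ (by positivity), mul_comm, ← Real.sqrt_mul Real.pi_pos.le]
    exact Real.sqrt_le_sqrt (abs_arg_le_pi_mul_norm_one_sub (h.norm_pow_eq_one j))
  calc ∑ j ∈ Finset.Icc 1 k, (√‖1 - l ^ j‖)⁻¹
      ≤ ∑ j ∈ Finset.Icc 1 k, √π * (√|(l ^ j).arg|)⁻¹ := Finset.sum_le_sum hterm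
    _ = √π * ∑ j ∈ Finset.Icc 1 k, (√|(l ^ j).arg|)⁻¹ := (Finset.mul_sum ..).symm
    _ ≤ √π * (4 * √π / (c / k)) := by
        gcongr
        exact sum_inv_sqrt_abs_le_of_separated (by positivity) Real.pi_pos.le hlow
          (fun j _ => Complex.abs_arg_le_pi _) (h.pairwise_div_le_abs_arg_pow_sub k)
    _ = 4 * π / c * k := by
        field_simp
        rw [Real.sq_sqrt Real.pi_pos.le]

-- The geometric sum costs a small divisor of order `n / c`, which the `1 / n` of the logarithm
-- series absorbs: the bound is uniform in `k` and summable in `n` for `r < 1`.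
lemma norm_sum_mul_pow_pow_div_le (h : IsBadlyApproximableMultiplier c l) {r : ℝ} (hr : 0 ≤ r)
    (k n : ℕ) : ‖∑ j ∈ Finset.Icc 1 k, (r * l ^ j) ^ n / n‖ ≤ 2 / c * r ^ n := by
  have hc := h.pos
  rcases n.eq_zero_or_pos with rfl | hn
  · simpa using div_nonneg zero_le_two hc.le
  have hn' : (0 : ℝ) < n := Nat.cast_pos.mpr hn
  have hgeom : ‖∑ i ∈ Finset.range k, (l ^ n) ^ i‖ ≤ 2 / c * n :=
    calc ‖∑ i ∈ Finset.range k, (l ^ n) ^ i‖ ≤ 2 / ‖1 - l ^ n‖ :=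
          norm_geom_sum_le (h.norm_pow_eq_one n).le (h.pow_ne_one hn) k
      _ ≤ 2 / (c / n) := by
          gcongr
          exact h.div_le_norm_one_sub_pow n hn
      _ = 2 / c * n := by field_simp
  have hfactor : ∑ j ∈ Finset.Icc 1 k, (r * l ^ j) ^ n / n
      = r ^ n / n * (l ^ n * ∑ i ∈ Finset.range k, (l ^ n) ^ i) := by
    rw [← Finset.Ico_add_one_right_eq_Icc, Finset.sum_Ico_eq_sum_range, Nat.add_sub_cancel,
      Finset.mul_sum, Finset.mul_sum]
    refine Finset.sum_congr rfl fun i _ => ?_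
    rw [mul_pow, pow_right_comm, pow_add, pow_one]
    ring
  calc ‖∑ j ∈ Finset.Icc 1 k, (r * l ^ j) ^ n / n‖
      = r ^ n / n * ‖∑ i ∈ Finset.range k, (l ^ n) ^ i‖ := by
        rw [hfactor, norm_mul, norm_mul, h.norm_pow_eq_one, one_mul, norm_div, norm_pow,
          Complex.norm_natCast, Complex.norm_real, Real.norm_of_nonneg hr]
    _ ≤ r ^ n / n * (2 / c * n) := by gcongr
    _ = 2 / c * r ^ n := by field_simp

lemma neg_sum_log_norm_one_sub_mul_pow_le (h : IsBadlyApproximableMultiplier c l) {r : ℝ}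
    (hr0 : 0 ≤ r) (hr1 : r < 1) (k : ℕ) :
    -∑ j ∈ Finset.Icc 1 k, Real.log ‖1 - r * l ^ j‖ ≤ 2 / c * (1 - r)⁻¹ := by
  refine neg_sum_log_norm_one_sub_le (fun j _ => ?_)
    ((hasSum_geometric_of_lt_one hr0 hr1).mul_left (2 / c)) (h.norm_sum_mul_pow_pow_div_le hr0 k)
  rwa [norm_mul, h.norm_pow_eq_one, mul_one, Complex.norm_real, Real.norm_of_nonneg hr0]

lemma neg_sum_log_norm_one_sub_pow_le (h : IsBadlyApproximableMultiplier c l) {σ : ℝ}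
    (hσ0 : 0 < σ) (hσ1 : σ ≤ 1) (k : ℕ) :
    -∑ j ∈ Finset.Icc 1 k, Real.log ‖1 - l ^ j‖
      ≤ 2 / c * (σ ^ 2)⁻¹ + 8 * π / c * σ * k := by
  have hinner := h.neg_sum_log_norm_one_sub_mul_pow_le (r := 1 - σ ^ 2)
    (sub_nonneg.mpr (pow_le_one₀ hσ0.le hσ1)) (sub_lt_self 1 (pow_pos hσ0 2)) k
  rw [sub_sub_cancel] at hinner
  have hcompare : ∑ j ∈ Finset.Icc 1 k, Real.log ‖1 - (1 - σ ^ 2 : ℝ) * l ^ j‖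
      ≤ ∑ j ∈ Finset.Icc 1 k, Real.log ‖1 - l ^ j‖
        + 2 * σ * ∑ j ∈ Finset.Icc 1 k, (√‖1 - l ^ j‖)⁻¹ := by
    rw [Finset.mul_sum, ← Finset.sum_add_distrib]
    exact Finset.sum_le_sum fun j hj => log_norm_one_sub_mul_le (h.norm_pow_eq_one j).le
      (h.pow_ne_one (Finset.mem_Icc.mp hj).1) hσ0 hσ1
  have hsqrt : 2 * σ * ∑ j ∈ Finset.Icc 1 k, (√‖1 - l ^ j‖)⁻¹ ≤ 8 * π / c * σ * k :=
    calc _ ≤ 2 * σ * (4 * π / c * k) := by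
          gcongr
          exact h.sum_inv_sqrt_norm_one_sub_pow_le k
      _ = 8 * π / c * σ * k := by ring
  linarith

lemma exists_exp_le_prod_norm_one_sub_pow (h : IsBadlyApproximableMultiplier c l) {ε : ℝ}
    (hε : 0 < ε) :
    ∃ B : ℝ, ∀ k : ℕ, Real.exp (-(B + ε * k)) ≤ ∏ j ∈ Finset.Icc 1 k, ‖1 - l ^ j‖ := by
  have hc := h.pos
  set σ := min 1 (ε * c / (8 * π))
  have hσ0 : 0 < σ := lt_min one_pos (by positivity)
  refine ⟨2 / c * (σ ^ 2)⁻¹, fun k => ?_⟩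
  have hpos : ∀ j ∈ Finset.Icc 1 k, 0 < ‖1 - l ^ j‖ := fun j hj =>
    h.norm_one_sub_pow_pos (Finset.mem_Icc.mp hj).1
  rw [← Real.le_log_iff_exp_le (Finset.prod_pos hpos),
    Real.log_prod fun j hj => (hpos j hj).ne', neg_le]
  refine (h.neg_sum_log_norm_one_sub_pow_le hσ0 (min_le_left _ _) k).trans ?_
  gcongr
  calc 8 * π / c * σ ≤ 8 * π / c * (ε * c / (8 * π)) := by
        gcongr
        exact min_le_right _ _
    _ = ε := by field_simp

end IsBadlyApproximableMultiplier

section Average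

lemma tendsto_inv_mul_geom_sum {w : ℂ} (hw : ‖w‖ ≤ 1) (hw1 : w ≠ 1) :
    Tendsto (fun N : ℕ => (N : ℂ)⁻¹ * ∑ n ∈ Finset.range N, w ^ n) atTop (𝓝 0) := by
  refine squeeze_zero_norm (fun N => ?_)
    (tendsto_const_div_atTop_nhds_zero_nat (2 / ‖1 - w‖))
  rw [norm_mul, norm_inv, Complex.norm_natCast, ← div_eq_inv_mul]
  gcongr
  exact norm_geom_sum_le hw hw1 N

lemma norm_inv_mul_geom_sum_le_one {w : ℂ} (hw : ‖w‖ ≤ 1) (N : ℕ) :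
    ‖(N : ℂ)⁻¹ * ∑ n ∈ Finset.range N, w ^ n‖ ≤ 1 := by
  have hsum : ‖∑ n ∈ Finset.range N, w ^ n‖ ≤ N := by
    simpa using norm_sum_le_of_le (Finset.range N) fun n _ =>
      (norm_pow w n).trans_le (pow_le_one₀ (norm_nonneg w) hw)
  rw [norm_mul, norm_inv, Complex.norm_natCast, ← div_eq_inv_mul]
  exact div_le_one_of_le₀ hsum N.cast_nonneg

lemma tendsto_average_tsum_pow_mul {l : ℂ} (hl : ‖l‖ ≤ 1) (hl1 : ∀ k : ℕ, 0 < k → l ^ k ≠ 1)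
    {b : ℕ → ℂ} (hb : Summable b) :
    Tendsto (fun N : ℕ => (N : ℂ)⁻¹ * ∑ n ∈ Finset.range N, ∑' k, (l ^ n) ^ k * b k) atTop
      (𝓝 (b 0)) := by
  have hpow : ∀ n : ℕ, ‖l ^ n‖ ≤ 1 := fun n => by
    rw [norm_pow]
    exact pow_le_one₀ (norm_nonneg l) hl
  have hlim := tendsto_tsum_of_dominated_convergence (𝓕 := atTop)
    (f := fun (N : ℕ) k => ((N : ℂ)⁻¹ * ∑ n ∈ Finset.range N, (l ^ k) ^ n) * b k)
    (g := fun k => if k = 0 then b 0 else 0) hb.norm ?_ ?_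
  · rw [tsum_ite_eq] at hlim
    refine hlim.congr fun N => ?_
    rw [← Summable.tsum_finsetSum fun n _ => ?_, ← tsum_mul_left]
    · refine tsum_congr fun k => ?_
      rw [mul_assoc, Finset.sum_mul]
      simp only [pow_right_comm]
    · refine .of_norm_bounded hb.norm fun k => ?_
      rw [norm_mul, norm_pow]
      exact mul_le_of_le_one_left (norm_nonneg _) (pow_le_one₀ (norm_nonneg _) (hpow n))
  · rintro (_ | k)
    · refine tendsto_const_nhds.congr' ?_
      filter_upwards [eventually_ne_atTop 0] with N hN
      simp [hN]
    · simpa using (tendsto_inv_mul_geom_sum (hpow _) (hl1 _ k.succ_pos)).mul_const (b (k + 1))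
  · refine .of_forall fun N k => ?_
    rw [norm_mul]
    exact mul_le_of_le_one_left (norm_nonneg _) (norm_inv_mul_geom_sum_le_one (hpow k) N)

end Average

/-- The small denominator `(1 - l ^ k) * (1 - l ^ (-k))` attached to a multiplier `l`; it is `D α k`
when `l = exp (2πiα)`. -/
def smallDivisor {K : Type*} [Field K] (l : K) (k : ℕ) : K := (1 - l ^ k) * (1 - l⁻¹ ^ k)

/-- The `k`-th term `x ^ k / (D(1) ⋯ D(k))` of the linear solution `m₁`. -/
def linearTerm {K : Type*} [Field K] (l x : K) (k : ℕ) : K :=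
  x ^ k / ∏ j ∈ Finset.Icc 1 k, smallDivisor l j

/-- The linear solution `m₁` as a function of the multiplier `l` instead of `α`. Off the domain of
summability its value is the junk value `0`. -/
noncomputable def linearSolution {𝕜 : Type*} [NormedField 𝕜] (l x : 𝕜) : 𝕜 :=
  ∑' k, linearTerm l x k

section Field

variable {K : Type*} [Field K] {l : K}

lemma smallDivisor_eq_sub (hl : l ≠ 0) (k : ℕ) : smallDivisor l k = 2 - l ^ k - l⁻¹ ^ k := by
  have hmul : l ^ k * l⁻¹ ^ k = 1 := by rw [← mul_pow, mul_inv_cancel₀ hl, one_pow]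
  rw [smallDivisor]
  linear_combination hmul

lemma smallDivisor_ne_zero {k : ℕ} (hk : l ^ k ≠ 1) : smallDivisor l k ≠ 0 :=
  mul_ne_zero (sub_ne_zero.mpr hk.symm)
    (sub_ne_zero.mpr fun h => hk (by rw [← inv_inv (l ^ k), ← inv_pow, ← h, inv_one]))

lemma linearTerm_zero (l x : K) : linearTerm l x 0 = 1 := by
  simp [linearTerm]

lemma linearTerm_mul (l w x : K) (k : ℕ) : linearTerm l (w * x) k = w ^ k * linearTerm l x k := by
  rw [linearTerm, linearTerm, mul_pow, mul_div_assoc]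

lemma smallDivisor_mul_linearTerm_succ {k : ℕ} (hk : l ^ (k + 1) ≠ 1) (x : K) :
    smallDivisor l (k + 1) * linearTerm l x (k + 1) = x * linearTerm l x k := by
  have hd := smallDivisor_ne_zero hk
  rw [linearTerm, linearTerm, Finset.prod_Icc_succ_top (Nat.le_add_left 1 k)]
  field_simp
  ring

end Field

section NormedField

variable {𝕜 : Type*} [NormedField 𝕜] {l x : 𝕜}

lemma norm_linearTerm_eq_of_norm_eq {y : 𝕜} (h : ‖y‖ = ‖x‖) (k : ℕ) :
    ‖linearTerm l y k‖ = ‖linearTerm l x k‖ := by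
  rw [linearTerm, linearTerm, norm_div, norm_div, norm_pow, norm_pow, h]

lemma linearSolution_mul (hl : l ≠ 0)
    (hl1 : ∀ k : ℕ, 0 < k → l ^ k ≠ 1) (hx : Summable (linearTerm l x))
    (hlx : Summable (linearTerm l (l * x))) (hxl : Summable (linearTerm l (x / l))) :
    linearSolution l (l * x) = (2 - x) * linearSolution l x - linearSolution l (x / l) := by
  have hdiv : HasSum (fun k => smallDivisor l k * linearTerm l x k)
      (2 * linearSolution l x - linearSolution l (l * x) - linearSolution l (x / l)) := by
    refine (((hx.hasSum.mul_left 2).sub hlx.hasSum).sub hxl.hasSum).congr_fun fun k => ?_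
    rw [div_eq_inv_mul, linearTerm_mul, linearTerm_mul, smallDivisor_eq_sub hl]
    ring
  have hshift : HasSum (fun k => smallDivisor l (k + 1) * linearTerm l x (k + 1))
      (x * linearSolution l x) :=
    (hx.hasSum.mul_left x).congr_fun fun k =>
      smallDivisor_mul_linearTerm_succ (hl1 _ k.succ_pos) x
  have hzero : smallDivisor l 0 = 0 := by simp [smallDivisor]
  rw [← hasSum_nat_add_iff' 1, Finset.sum_range_one, hzero, zero_mul, sub_zero] at hdiv
  linear_combination -hdiv.unique hshift

end NormedField

section UnitMultiplier

variable {l x : ℂ}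

lemma norm_smallDivisor (hl : ‖l‖ = 1) (k : ℕ) : ‖smallDivisor l k‖ = ‖1 - l ^ k‖ ^ 2 := by
  have hlk : l ^ k ≠ 0 := pow_ne_zero k (norm_ne_zero_iff.mp (hl ▸ one_ne_zero))
  have hinv : ‖1 - l⁻¹ ^ k‖ = ‖1 - l ^ k‖ := by
    rw [← one_mul ‖1 - l⁻¹ ^ k‖, ← one_pow k, ← hl, ← norm_pow, ← norm_mul, mul_one_sub, inv_pow,
      mul_inv_cancel₀ hlk, norm_sub_rev]
  rw [smallDivisor, norm_mul, hinv, sq]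

lemma summable_linearTerm_of_norm_eq {y : ℂ} (h : ‖y‖ = ‖x‖) (hx : Summable (linearTerm l x)) :
    Summable (linearTerm l y) :=
  .of_norm_bounded hx.norm fun k => (norm_linearTerm_eq_of_norm_eq h k).le

lemma norm_linearSolution_le_of_norm_eq {y : ℂ} (h : ‖y‖ = ‖x‖) (hx : Summable (linearTerm l x)) :
    ‖linearSolution l y‖ ≤ ∑' k, ‖linearTerm l x k‖ :=
  tsum_of_norm_bounded hx.norm.hasSum fun k => (norm_linearTerm_eq_of_norm_eq h k).le

lemma exists_linearSolution_pow_mul_ne_zero (hl : ‖l‖ ≤ 1) (hl1 : ∀ k : ℕ, 0 < k → l ^ k ≠ 1)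
    (hx : Summable (linearTerm l x)) : ∃ n : ℕ, linearSolution l (l ^ n * x) ≠ 0 := by
  by_contra! hzero
  have horbit : ∀ n : ℕ, ∑' k, (l ^ n) ^ k * linearTerm l x k = 0 := fun n => by
    simpa only [linearSolution, linearTerm_mul] using hzero n
  have haverage := tendsto_average_tsum_pow_mul hl hl1 hx
  simp only [horbit, Finset.sum_const_zero, mul_zero, linearTerm_zero] at haverage
  exact zero_ne_one (tendsto_nhds_unique tendsto_const_nhds haverage)

lemma IsBadlyApproximableMultiplier.summable_linearTerm {c : ℝ}
    (h : IsBadlyApproximableMultiplier c l) (hx : ‖x‖ < 1) : Summable (linearTerm l x) := by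
  obtain ⟨ε, hε, hratio⟩ : ∃ ε > 0, ‖x‖ * Real.exp (2 * ε) < 1 := by
    have hcont : Tendsto (fun ε : ℝ => ‖x‖ * Real.exp (2 * ε)) (𝓝[>] 0)
        (𝓝 ‖x‖) :=
      (Continuous.tendsto' (by fun_prop) 0 _ (by simp)).mono_left nhdsWithin_le_nhds
    exact ((eventually_mem_nhdsWithin).and (hcont.eventually_lt_const hx)).exists
  obtain ⟨B, hB⟩ := h.exists_exp_le_prod_norm_one_sub_pow hε
  refine .of_norm_bounded (g := fun k => Real.exp (2 * B) * (‖x‖ * Real.exp (2 * ε)) ^ k)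
    ((summable_geometric_of_lt_one (by positivity) hratio).mul_left _) fun k => ?_
  calc ‖linearTerm l x k‖ = ‖x‖ ^ k / (∏ j ∈ Finset.Icc 1 k, ‖1 - l ^ j‖) ^ 2 := by
        simp only [linearTerm, norm_div, norm_pow, norm_prod, norm_smallDivisor h.norm_eq_one,
          Finset.prod_pow]
    _ ≤ ‖x‖ ^ k / Real.exp (-(B + ε * k)) ^ 2 := by
        gcongr
        exact hB k
    _ = Real.exp (2 * B) * (‖x‖ * Real.exp (2 * ε)) ^ k := by
        rw [mul_pow, ← Real.exp_nat_mul, ← Real.exp_nat_mul, div_eq_mul_inv, ← Real.exp_neg,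
          mul_left_comm, ← Real.exp_add]
        push_cast
        ring_nf

end UnitMultiplier

/-- The transfer matrix `A(x)` of the second-order equation satisfied by the linear solution. -/
def transferMatrix (x : ℂ) : Matrix (Fin 2) (Fin 2) ℂ := !![2 - x, -1; 1, 0]

/-- The vector `V(x) = (m₁(x), m₁(x/λ))` of two consecutive values of the linear solution. -/
noncomputable def solutionVector (l x : ℂ) : Fin 2 → ℂ :=
  ![linearSolution l x, linearSolution l (x / l)]

lemma eq_matProd_mulVec {A : ℕ → Matrix (Fin 2) (Fin 2) ℂ} {v : ℕ → Fin 2 → ℂ}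
    (hv : ∀ n, v (n + 1) = A n *ᵥ v n) (n : ℕ) : v n = matProd A n *ᵥ v 0 := by
  induction n with
  | zero => rw [matProd, one_mulVec]
  | succ n ih => rw [hv, ih, matProd, mulVec_mulVec]

section Cocycle

variable {l x : ℂ}

lemma solutionVector_mul (hl : ‖l‖ = 1) (hl1 : ∀ k : ℕ, 0 < k → l ^ k ≠ 1)
    (hx : Summable (linearTerm l x)) :
    solutionVector l (l * x) = transferMatrix x *ᵥ solutionVector l x := by
  have hl0 : l ≠ 0 := norm_ne_zero_iff.mp (hl ▸ one_ne_zero)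
  have hmul : linearSolution l (l * x) = (2 - x) * linearSolution l x - linearSolution l (x / l) :=
    linearSolution_mul hl0 hl1 hx (summable_linearTerm_of_norm_eq (by simp [hl]) hx)
      (summable_linearTerm_of_norm_eq (by simp [hl]) hx)
  ext i
  fin_cases i
  · simp [solutionVector, transferMatrix, hmul, sub_eq_add_neg, mul_comm]
  · simp [solutionVector, transferMatrix, hl0]

lemma solutionVector_pow_mul (hl : ‖l‖ = 1) (hl1 : ∀ k : ℕ, 0 < k → l ^ k ≠ 1)
    (hx : Summable (linearTerm l x)) (n : ℕ) :
    solutionVector l (l ^ n * x)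
      = matProd (fun k => transferMatrix (l ^ k * x)) n *ᵥ solutionVector l x := by
  have hstep : ∀ n : ℕ, solutionVector l (l ^ (n + 1) * x)
      = transferMatrix (l ^ n * x) *ᵥ solutionVector l (l ^ n * x) := fun n => by
    rw [pow_succ', mul_assoc]
    exact solutionVector_mul hl hl1 (summable_linearTerm_of_norm_eq (by simp [hl]) hx)
  simpa using eq_matProd_mulVec (v := fun n => solutionVector l (l ^ n * x)) hstep n

lemma solutionVector_ne_zero (hl : ‖l‖ = 1) (hl1 : ∀ k : ℕ, 0 < k → l ^ k ≠ 1)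
    (hx : Summable (linearTerm l x)) : solutionVector l x ≠ 0 := by
  intro hzero
  obtain ⟨n, hn⟩ := exists_linearSolution_pow_mul_ne_zero hl.le hl1 hx
  have horbit := solutionVector_pow_mul hl hl1 hx n
  rw [hzero, mulVec_zero] at horbit
  exact hn (congrFun horbit 0)

lemma norm_solutionVector_le_of_norm_eq (hl : ‖l‖ = 1) (hx : Summable (linearTerm l x)) {y : ℂ}
    (hy : ‖y‖ = ‖x‖) : ‖solutionVector l y‖ ≤ ∑' k, ‖linearTerm l x k‖ := by
  rw [pi_norm_le_iff_of_nonneg (tsum_nonneg fun _ => norm_nonneg _), Fin.forall_fin_two]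
  exact ⟨norm_linearSolution_le_of_norm_eq hy hx,
    norm_linearSolution_le_of_norm_eq (by rw [norm_div, hl, div_one, hy]) hx⟩

end Cocycle

section Rotation

variable {α : ℝ}

lemma exp_two_pi_mul_I_mul_pow (α : ℝ) (n : ℕ) :
    Complex.exp (2 * π * Complex.I * α) ^ n
      = Complex.exp (2 * π * Complex.I * (n * α : ℝ)) := by
  rw [← Complex.exp_nat_mul]
  push_cast
  ring_nf

lemma norm_exp_two_pi_mul_I_mul (α : ℝ) : ‖Complex.exp (2 * π * Complex.I * α)‖ = 1 := by
  rw [show (2 * π * Complex.I * α : ℂ) = (2 * π * α : ℝ) * Complex.I by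
    push_cast; ring, Complex.norm_exp_ofReal_mul_I]

lemma four_mul_abs_sub_round_le_norm_one_sub_exp (θ : ℝ) :
    4 * |θ - round θ| ≤ ‖1 - Complex.exp (2 * π * Complex.I * θ)‖ := by
  set y := θ - round θ with hy
  have hexp : Complex.exp (2 * π * Complex.I * θ)
      = Complex.exp (Complex.I * (2 * π * y : ℝ)) := by
    rw [← Complex.exp_periodic.sub_int_mul_eq (round θ), hy]
    push_cast
    ring_nf
  have hsin : 2 / π * |π * y| ≤ |Real.sin (π * y)| := by
    refine Real.mul_abs_le_abs_sin ?_
    rw [abs_mul, abs_of_pos Real.pi_pos, div_eq_mul_one_div]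
    gcongr
    exact abs_sub_round θ
  rw [abs_mul, abs_of_pos Real.pi_pos, ← mul_assoc, div_mul_cancel₀ _ Real.pi_ne_zero] at hsin
  rw [hexp, norm_sub_rev, Complex.norm_exp_I_mul_ofReal_sub_one, Real.norm_eq_abs, abs_mul,
    abs_two, mul_assoc, mul_div_cancel_left₀ _ two_ne_zero]
  linarith

lemma isBadlyApproximableMultiplier_exp {c : ℝ} (hc : 0 < c)
    (hα : ∀ (p : ℤ) (q : ℕ), 0 < q → c / (q : ℝ) ^ 2 ≤ |α - p / q|) :
    IsBadlyApproximableMultiplier (4 * c) (Complex.exp (2 * π * Complex.I * α)) where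
  pos := by positivity
  norm_eq_one := norm_exp_two_pi_mul_I_mul α
  div_le_norm_one_sub_pow n hn := by
    have hn' : (0 : ℝ) < n := Nat.cast_pos.mpr hn
    rw [exp_two_pi_mul_I_mul_pow]
    calc 4 * c / n = 4 * (n * (c / (n : ℝ) ^ 2)) := by field_simp
      _ ≤ 4 * (n * |α - round (n * α) / n|) := by
          gcongr
          exact hα _ n hn
      _ = 4 * |n * α - round (n * α)| := by
          rw [← abs_of_pos hn', ← abs_mul, abs_of_pos hn', mul_sub, mul_div_cancel₀ _ hn'.ne']
      _ ≤ _ := four_mul_abs_sub_round_le_norm_one_sub_exp _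

lemma exp_two_pi_mul_I_mul_pow_ne_one (hα : Irrational α) {n : ℕ} (hn : 0 < n) :
    Complex.exp (2 * π * Complex.I * α) ^ n ≠ 1 := by
  rw [exp_two_pi_mul_I_mul_pow, Ne, Complex.exp_eq_one_iff]
  rintro ⟨m, hm⟩
  rw [mul_comm, mul_left_inj' Complex.two_pi_I_ne_zero] at hm
  exact (hα.natCast_mul hn.ne').ne_int m (by exact_mod_cast hm)

lemma ofReal_D (α : ℝ) (k : ℕ) :
    (D α k : ℂ) = smallDivisor (Complex.exp (2 * π * Complex.I * α)) k := by
  rw [smallDivisor_eq_sub (Complex.exp_ne_zero _), inv_pow, exp_two_pi_mul_I_mul_pow,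
    ← Complex.exp_neg, D]
  push_cast
  rw [Complex.cos]
  ring_nf

lemma linearTerm_exp_two_pi_mul_I_mul (α : ℝ) (x : ℂ) (k : ℕ) :
    linearTerm (Complex.exp (2 * π * Complex.I * α)) x k
      = x ^ k / ∏ j ∈ Finset.Icc 1 k, (D α j : ℂ) := by
  simp only [linearTerm, ofReal_D]

end Rotation

theorem stmt15_general (α : ℝ) (hirr : Irrational α)
    (l : ℂ) (hl : l = Complex.exp (2 * Real.pi * Complex.I * (α : ℂ)))
    (m₁ : ℂ → ℂ)
    (hm₁ : ∀ x : ℂ, m₁ x = ∑' k : ℕ, x ^ k / ∏ j ∈ Finset.Icc 1 k, (D α j : ℂ))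
    (A : ℂ → Matrix (Fin 2) (Fin 2) ℂ) (hA : ∀ x : ℂ, A x = !![2 - x, -1; 1, 0])
    (V : ℂ → Fin 2 → ℂ) (hV : ∀ x : ℂ, V x = ![m₁ x, m₁ (x / l)])
    (x : ℂ) (hx : Summable fun k : ℕ => x ^ k / ∏ j ∈ Finset.Icc 1 k, (D α j : ℂ)) :
    V (l * x) = (A x).mulVec (V x) ∧
    (∀ n : ℕ, 1 ≤ n →
      V (l ^ n * x) = (matProd (fun k => A (l ^ k * x)) n).mulVec (V x)) ∧
    V x ≠ 0 ∧
    ∃ C : ℝ, ∀ n : ℕ, ‖(matProd (fun k => A (l ^ k * x)) n).mulVec (V x)‖ ≤ C := by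
  have hl_norm : ‖l‖ = 1 := hl ▸ norm_exp_two_pi_mul_I_mul α
  have hl_pow : ∀ k : ℕ, 0 < k → l ^ k ≠ 1 := fun k hk =>
    hl ▸ exp_two_pi_mul_I_mul_pow_ne_one hirr hk
  simp only [← linearTerm_exp_two_pi_mul_I_mul, ← hl] at hm₁ hx
  obtain rfl : m₁ = linearSolution l := funext hm₁
  obtain rfl : A = transferMatrix := funext hA
  obtain rfl : V = solutionVector l := funext hV
  have hiter := solutionVector_pow_mul hl_norm hl_pow hx
  refine ⟨solutionVector_mul hl_norm hl_pow hx, fun n _ => hiter n,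
    solutionVector_ne_zero hl_norm hl_pow hx, ∑' k, ‖linearTerm l x k‖, fun n => ?_⟩
  rw [← hiter]
  exact norm_solutionVector_le_of_norm_eq hl_norm hx (by simp [hl_norm])

/-- for badly approximable irrational `α`, `λ = exp(2πiα)`, the linear
solution `m₁(x) = Σ_{k≥0} x^k/(D(1)⋯D(k))` (radius of convergence 1), the matrix
`A(x) = [[2-x, -1],[1, 0]]` and the vector `V(x) = (m₁(x), m₁(x/λ))`, one has the
cocycle relation `V(λx) = A(x)·V(x)`, hence `V(λⁿx) = A(λ^{n-1}x)⋯A(x)·V(x)` for all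
`n ≥ 1`; moreover for each `|x| < 1` the vector `V(x)` is nonzero and
`sup_n ‖A(λ^{n-1}x)⋯A(x)·V(x)‖ < ∞`. -/
theorem stmt15 (α : ℝ) (hirr : Irrational α)
    (hbad : ∃ c > (0 : ℝ), ∀ (p : ℤ) (q : ℕ), 0 < q → c / (q : ℝ) ^ 2 ≤ |α - p / q|)
    (l : ℂ) (hl : l = Complex.exp (2 * Real.pi * Complex.I * (α : ℂ)))
    (m₁ : ℂ → ℂ)
    (hm₁ : ∀ x : ℂ, m₁ x = ∑' k : ℕ, x ^ k / ∏ j ∈ Finset.Icc 1 k, (D α j : ℂ))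
    (A : ℂ → Matrix (Fin 2) (Fin 2) ℂ) (hA : ∀ x : ℂ, A x = !![2 - x, -1; 1, 0])
    (V : ℂ → Fin 2 → ℂ) (hV : ∀ x : ℂ, V x = ![m₁ x, m₁ (x / l)])
    (x : ℂ) (hx : ‖x‖ < 1) :
    V (l * x) = (A x).mulVec (V x) ∧
    (∀ n : ℕ, 1 ≤ n →
      V (l ^ n * x) = (matProd (fun k => A (l ^ k * x)) n).mulVec (V x)) ∧
    V x ≠ 0 ∧
    ∃ C : ℝ, ∀ n : ℕ, ‖(matProd (fun k => A (l ^ k * x)) n).mulVec (V x)‖ ≤ C := by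
  obtain ⟨c, hc, hα⟩ := hbad
  refine stmt15_general α hirr l hl m₁ hm₁ A hA V hV x ?_
  simpa only [← linearTerm_exp_two_pi_mul_I_mul] using
    (isBadlyApproximableMultiplier_exp hc hα).summable_linearTerm hx
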